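/- Let r ≥ 1 be an integer, C ≥ 1 real, and for each prime p let θ_p : ℕ^r → ℝ be a non-negative function satisfying: (a) for all k, k' ∈ ℕ^r that differ only in the i-th coordinate with k_i = k'_i + 1, one has |θ_p(k) − θ_p(k')| ≤ C if k_i = 1 and #supp(k) ≥ 2, and |θ_p(k) − θ_p(k')| ≤ C·p^{−k_i} otherwise; and (b) θ_p(0,…,0) ≤ 1 + C·p^{−2}, and θ_p(k) ≤ 1 + #supp(k)·C·p^{−1} for all k ≠ (0,…,0), where supp(k) = {i : k_i ≠ 0}. Fix positive integers e₁,…,e_{r−1} and set A_p(ν) = θ_p(v_p(e₁),…,v_p(e_{r−1}),ν) for each prime p and ν ∈ ℕ. Then: (1) for all primes p and all ν ≥ 1, |A_p(ν) − A_p(ν−1)| ≤ C if ν = 1 and p | e₁⋯e_{r−1}, and |A_p(ν) − A_p(ν−1)| ≤ C·p^{−ν} otherwise; and (2) for every positive integer k, the product ∏_{p ∤ k} A_p(0) converges and satisfies ∏_{p ∤ k} A_p(0) ≤ (3rC)^{ω(e₁⋯e_{r−1})}·∏_p (1 + C·p^{−2}). -/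

import Mathlib

/-!
Part (1) is condition (a) at the last coordinate: for a prime `p ∤ e₁⋯e_{r-1}` all the other
coordinates vanish, so the support of the specialized vector has at most one element and the strong
bound `C / p ^ ν` applies.

For part (2), write `f_p = A_p(0)`. At the primes not dividing `e₁⋯e_{r-1}` one has
`0 ≤ f_p ≤ 1 + C / p²`, and at the finitely many others `0 ≤ f_p ≤ 3rC`. Convergence uses
`f = max(1, f) · min(1, f)`: the product of `max(1, f_p)` converges because
`∑ (max(1, f_p) - 1)` does, and the finite products of `min(1, f_p) ∈ [0, 1]` decrease and are
bounded below (`multipliable_of_nonneg_of_summable`). The estimate holds for every finite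
subproduct, hence in the limit.

"Converges" is `Multipliable` in `ℝ`, which allows the limit `0`; the hypotheses give no lower
bound for `f_p` that would exclude it.
-/

/-- The number of nonzero coordinates of `k`, i.e. `#supp(k)`. -/
def suppCard {r : ℕ} (k : Fin r → ℕ) : ℕ := (Finset.univ.filter fun i => k i ≠ 0).card

/-- The local conditions of the set `Θ₄,ᵣ(C)`: each `θ_p` is non-negative, and satisfies the
difference conditions (a) and the size conditions (b). -/
def LocCond (r : ℕ) (C : ℝ) (θ : ℕ → (Fin r → ℕ) → ℝ) : Prop :=
  ∀ p : ℕ, p.Prime →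
    (∀ k : Fin r → ℕ, 0 ≤ θ p k) ∧
    (∀ k k' : Fin r → ℕ, ∀ i : Fin r, k i = k' i + 1 → (∀ j : Fin r, j ≠ i → k j = k' j) →
      ((k i = 1 ∧ 2 ≤ suppCard k) → |θ p k - θ p k'| ≤ C) ∧
      (¬(k i = 1 ∧ 2 ≤ suppCard k) → |θ p k - θ p k'| ≤ C / (p : ℝ) ^ (k i))) ∧
    (θ p (fun _ => 0) ≤ 1 + C / (p : ℝ) ^ 2) ∧
    (∀ k : Fin r → ℕ, k ≠ (fun _ => 0) → θ p k ≤ 1 + (suppCard k : ℝ) * C / (p : ℝ))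

lemma suppCard_snoc {m : ℕ} (v : Fin m → ℕ) (ν : ℕ) :
    suppCard (Fin.snoc v ν : Fin (m + 1) → ℕ) = suppCard v + if ν ≠ 0 then 1 else 0 := by
  simp only [suppCard, Finset.card_filter, Fin.sum_univ_castSucc, Fin.snoc_castSucc, Fin.snoc_last]

lemma suppCard_le {r : ℕ} (k : Fin r → ℕ) : suppCard k ≤ r := by
  simpa [suppCard] using Finset.card_le_univ (Finset.univ.filter fun i => k i ≠ 0)

lemma factorization_eq_zero_of_not_dvd_prod {m : ℕ} {e : Fin m → ℕ} {p : ℕ}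
    (h : ¬ p ∣ ∏ i, e i) : (fun i => (e i).factorization p) = fun _ => 0 := by
  funext i
  exact Nat.factorization_eq_zero_of_not_dvd
    fun hi => h (hi.trans (Finset.dvd_prod_of_mem e (Finset.mem_univ i)))

/-- Factors in `[0, 1]` always give a convergent product, possibly with value `0`. -/
lemma multipliable_of_mem_Icc {ι : Type*} {f : ι → ℝ} (h0 : ∀ i, 0 ≤ f i) (h1 : ∀ i, f i ≤ 1) :
    Multipliable f := by
  classical
  have hanti : Antitone fun s : Finset ι => ∏ i ∈ s, f i := by
    intro s t hst
    dsimp only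
    rw [← Finset.prod_sdiff hst]
    exact mul_le_of_le_one_left (Finset.prod_nonneg fun i _ => h0 i)
      (Finset.prod_le_one (fun i _ => h0 i) fun i _ => h1 i)
  exact ⟨_, tendsto_atTop_ciInf hanti ⟨0, by
    rintro _ ⟨s, rfl⟩
    exact Finset.prod_nonneg fun i _ => h0 i⟩⟩

/-- Only the excess of the factors over `1` has to be summable. -/
lemma multipliable_of_nonneg_of_summable {ι : Type*} {f : ι → ℝ} (h0 : ∀ i, 0 ≤ f i)
    (hs : Summable fun i => max 1 (f i) - 1) : Multipliable f := by
  have hmax : Multipliable fun i => max 1 (f i) := by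
    simpa using Real.multipliable_one_add_of_summable hs
  have hmin : Multipliable fun i => min 1 (f i) :=
    multipliable_of_mem_Icc (fun i => le_min zero_le_one (h0 i)) fun i => min_le_left _ _
  simpa [max_mul_min] using hmax.mul hmin

lemma prod_le_tprod_of_one_le {ι : Type*} {f : ι → ℝ} (h1 : ∀ i, 1 ≤ f i) (hf : Multipliable f)
    (s : Finset ι) : ∏ i ∈ s, f i ≤ ∏' i, f i := by
  classical
  refine ge_of_tendsto hf.hasProd ?_
  filter_upwards [Filter.eventually_ge_atTop s] with t hst
  rw [← Finset.prod_sdiff hst]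
  refine le_mul_of_one_le_left (Finset.prod_nonneg fun i _ => zero_le_one.trans (h1 i)) ?_
  simpa using Finset.prod_le_prod (s := t \ s) (fun i _ => zero_le_one) fun i _ => h1 i

lemma summable_div_sq_subtype (C : ℝ) (P : ℕ → Prop) :
    Summable fun p : {p : ℕ // P p} => C / (p.1 : ℝ) ^ 2 := by
  have h : Summable fun n : ℕ => C / (n : ℝ) ^ 2 := by
    simpa [div_eq_mul_inv] using
      (Real.summable_one_div_nat_pow.mpr (by norm_num : 1 < 2)).mul_left C
  exact h.comp_injective Subtype.val_injective

/-- Specializing a family `θ ∈ Θ₄,ᵣ(C)` (here `r = m + 1`) at `ν ↦ θ_p(v_p(e₁),…,v_p(e_{r-1}),ν)`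
produces local data `A_p` satisfying the one-variable conditions, with a convergent infinite
product over the primes not dividing `k` bounded by `(3rC)^{ω(e₁⋯e_{r-1})} ∏_p (1 + C/p²)`. -/
theorem locCond_specialize (m : ℕ) (C : ℝ) (hC : 1 ≤ C)
    (θ : ℕ → (Fin (m + 1) → ℕ) → ℝ) (hθ : LocCond (m + 1) C θ)
    (e : Fin m → ℕ) (he : ∀ i, 0 < e i) :
    (∀ p : ℕ, p.Prime → ∀ ν : ℕ, 1 ≤ ν →
      ((ν = 1 ∧ p ∣ ∏ i, e i) →
        |θ p (Fin.snoc (fun i => (e i).factorization p) ν) -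
            θ p (Fin.snoc (fun i => (e i).factorization p) (ν - 1))| ≤ C) ∧
      (¬(ν = 1 ∧ p ∣ ∏ i, e i) →
        |θ p (Fin.snoc (fun i => (e i).factorization p) ν) -
            θ p (Fin.snoc (fun i => (e i).factorization p) (ν - 1))| ≤ C / (p : ℝ) ^ ν)) ∧
    (∀ k : ℕ, 0 < k →
      Multipliable (fun p : {p : ℕ // p.Prime ∧ ¬ p ∣ k} =>
        θ p.1 (Fin.snoc (fun i => (e i).factorization p.1) 0)) ∧
      (∏' p : {p : ℕ // p.Prime ∧ ¬ p ∣ k},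
          θ p.1 (Fin.snoc (fun i => (e i).factorization p.1) 0)) ≤
        (3 * ((m : ℝ) + 1) * C) ^ (∏ i, e i).primeFactors.card *
          ∏' p : {p : ℕ // p.Prime}, (1 + C / (p.1 : ℝ) ^ 2)) := by
  classical
  have hC0 : 0 ≤ C := zero_le_one.trans hC
  have hE : ∏ i, e i ≠ 0 := Finset.prod_ne_zero_iff.mpr fun i _ => (he i).ne'
  refine ⟨fun p hp ν hν => ?_, fun k _ => ?_⟩
  · have hp1 : (1 : ℝ) ≤ p := by exact_mod_cast hp.one_lt.le
    obtain ⟨-, ha, -, -⟩ := hθ p hp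
    have key := ha (Fin.snoc (fun i => (e i).factorization p) ν)
      (Fin.snoc (fun i => (e i).factorization p) (ν - 1)) (Fin.last m)
      (by simp only [Fin.snoc_last]; omega)
      (fun j hj => by
        obtain ⟨j, rfl⟩ := Fin.exists_castSucc_eq.mpr hj
        simp only [Fin.snoc_castSucc])
    simp only [Fin.snoc_last] at key
    refine ⟨fun _ => ?_, fun hn => key.2 fun h => hn ⟨h.1, ?_⟩⟩
    · by_cases h : ν = 1 ∧ 2 ≤ suppCard (Fin.snoc (fun i => (e i).factorization p) ν :
          Fin (m + 1) → ℕ)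
      · exact key.1 h
      · exact (key.2 h).trans (div_le_self hC0 (one_le_pow₀ hp1))
    · by_contra hdvd
      have h2 := h.2
      rw [suppCard_snoc, factorization_eq_zero_of_not_dvd_prod hdvd] at h2
      simp only [suppCard, ne_eq, not_true_eq_false, Finset.filter_false, Finset.card_empty] at h2
      split_ifs at h2 <;> omega
  · set M : ℝ := 3 * ((m : ℝ) + 1) * C with hM
    set f : {p : ℕ // p.Prime ∧ ¬ p ∣ k} → ℝ :=
      fun p => θ p.1 (Fin.snoc (fun i => (e i).factorization p.1) 0) with hf
    have hm0 : (0 : ℝ) ≤ m := Nat.cast_nonneg m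
    have hM1 : 1 ≤ M := by rw [hM]; nlinarith [mul_nonneg hm0 hC0]
    have hone : ∀ n : ℕ, (1 : ℝ) ≤ 1 + C / (n : ℝ) ^ 2 := fun n =>
      le_add_of_nonneg_right (by positivity)
    have hf0 : ∀ p, 0 ≤ f p := fun p => (hθ p.1 p.2.1).1 _
    have hfgood : ∀ p, ¬ p.1 ∣ ∏ i, e i → f p ≤ 1 + C / (p.1 : ℝ) ^ 2 := by
      intro p hp
      have hz : (Fin.snoc (fun i => (e i).factorization p.1) 0 : Fin (m + 1) → ℕ)
          = fun _ => 0 := by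
        rw [factorization_eq_zero_of_not_dvd_prod hp]
        funext j
        refine Fin.lastCases ?_ (fun j => ?_) j
        · simp only [Fin.snoc_last]
        · simp only [Fin.snoc_castSucc]
      simp only [hf, hz]
      exact (hθ p.1 p.2.1).2.2.1
    have hfbad : ∀ p, f p ≤ M := by
      intro p
      obtain ⟨-, -, hb0, hb⟩ := hθ p.1 p.2.1
      have hp1 : (1 : ℝ) ≤ (p.1 : ℝ) := by exact_mod_cast p.2.1.one_lt.le
      by_cases hz : (Fin.snoc (fun i => (e i).factorization p.1) 0 : Fin (m + 1) → ℕ)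
          = fun _ => 0
      · simp only [hf, hz]
        have : C / (p.1 : ℝ) ^ 2 ≤ C := div_le_self hC0 (one_le_pow₀ hp1)
        rw [hM]; nlinarith [mul_nonneg hm0 hC0]
      · refine (hb _ hz).trans ?_
        have hs : ((suppCard (Fin.snoc (fun i => (e i).factorization p.1) 0 :
            Fin (m + 1) → ℕ) : ℕ) : ℝ) ≤ (m : ℝ) + 1 := by
          exact_mod_cast suppCard_le _
        have h1 := (div_le_self (mul_nonneg (Nat.cast_nonneg _) hC0) hp1).trans
          (mul_le_mul_of_nonneg_right hs hC0)
        rw [hM]; nlinarith [mul_nonneg hm0 hC0]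
    have hfin : {p : {p : ℕ // p.Prime ∧ ¬ p ∣ k} | p.1 ∣ ∏ i, e i}.Finite := by
      refine Set.Finite.of_finite_image (f := Subtype.val) ?_ Subtype.val_injective.injOn
      refine (Finset.finite_toSet (∏ i, e i).primeFactors).subset ?_
      rintro _ ⟨p, hp, rfl⟩
      exact Finset.mem_coe.mpr (Nat.mem_primeFactors.mpr ⟨p.2.1, hp, hE⟩)
    have hmult : Multipliable f := by
      refine multipliable_of_nonneg_of_summable hf0 ?_
      refine Summable.of_norm_bounded_eventually
        (summable_div_sq_subtype C fun p => p.Prime ∧ ¬ p ∣ k) ?_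
      refine hfin.subset fun p hp => ?_
      by_contra hdvd
      refine hp ?_
      change ‖max 1 (f p) - 1‖ ≤ C / (p.1 : ℝ) ^ 2
      rw [Real.norm_of_nonneg (sub_nonneg.mpr (le_max_left _ _)), sub_le_iff_le_add']
      exact max_le (hone _) (hfgood p hdvd)
    refine ⟨hmult, le_of_tendsto' hmult.hasProd fun s => ?_⟩
    calc ∏ p ∈ s, f p
        ≤ ∏ p ∈ s, ((if p.1 ∣ ∏ i, e i then M else 1) * (1 + C / (p.1 : ℝ) ^ 2)) := by
          refine Finset.prod_le_prod (fun p _ => hf0 p) fun p _ => ?_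
          split_ifs with h
          · exact (hfbad p).trans (le_mul_of_one_le_right (zero_le_one.trans hM1) (hone _))
          · simpa using hfgood p h
      _ = M ^ (s.filter fun p => p.1 ∣ ∏ i, e i).card *
            ∏ p ∈ s, (1 + C / (p.1 : ℝ) ^ 2) := by
          rw [Finset.prod_mul_distrib, Finset.prod_ite]
          simp
      _ ≤ M ^ (∏ i, e i).primeFactors.card *
            ∏' p : {p : ℕ // p.Prime}, (1 + C / (p.1 : ℝ) ^ 2) := by
          refine mul_le_mul (pow_le_pow_right₀ hM1 ?_) ?_
            (Finset.prod_nonneg fun p _ => zero_le_one.trans (hone _))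
            (pow_nonneg (zero_le_one.trans hM1) _)
          · refine Finset.card_le_card_of_injOn Subtype.val (fun p hp => ?_)
              Subtype.val_injective.injOn
            exact Nat.mem_primeFactors.mpr ⟨p.2.1, (Finset.mem_filter.mp hp).2, hE⟩
          · have := prod_le_tprod_of_one_le (fun p : {p : ℕ // p.Prime} => hone p.1)
              (Real.multipliable_one_add_of_summable (summable_div_sq_subtype C _))
              (s.map (Subtype.impEmbedding _ _ fun p (h : p.Prime ∧ ¬ p ∣ k) => h.1))
            simpa only [Finset.prod_map, Subtype.impEmbedding_apply_coe] using this
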